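/- Let σ : ℝ^{n_r} → ℝ^{n_r} be Lipschitz with constant L_σ, and let W_res, W_in satisfy γ := L_σ·‖W_res‖ < 1. For bounded inputs v, ṽ : ℤ → ℝ^{n_v} with unique bounded trajectories r, r̃, one has sup_k ‖r_k − r̃_k‖ ≤ (L_σ·‖W_in‖ / (1 − γ)) · sup_k ‖v_k − ṽ_k‖. (The input-history-to-state map is globally Lipschitz in the supremum norm.) -/

import Mathlib

open scoped NNReal

/-! Two trajectories of a driven contraction differ at time `k` by at most `γ` times their
difference at time `k - 1` plus a constant multiple of the difference of the inputs at time `k`.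
Taking suprema over all times gives `S ≤ γ * S + c`; since `S` is finite and `γ < 1`, the term
`γ * S` can be absorbed on the left. -/

theorem iSup_le_div_one_sub_of_le_mul_comp_add {ι : Type*} [Nonempty ι] {f : ι → ℝ} {p : ι → ι}
    {a : ℝ≥0} {c : ℝ} (ha : a < 1) (hf : BddAbove (Set.range f))
    (h : ∀ i, f i ≤ a * f (p i) + c) : ⨆ i, f i ≤ c / (1 - a) := by
  have absorb : ⨆ i, f i ≤ a * (⨆ i, f i) + c := ciSup_le fun i => by
    grw [h i, le_ciSup hf (p i)]
  have one_sub_pos : 0 < 1 - (a : ℝ) := sub_pos.2 (mod_cast ha)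
  rw [le_div_iff₀ one_sub_pos]
  linarith

theorem iSup_dist_le_of_driven_contraction {ι X U : Type*} [Nonempty ι] [PseudoMetricSpace X]
    [PseudoMetricSpace U] {F : X → U → X} {a b : ℝ≥0} (ha : a < 1)
    (hF : ∀ x y u w, dist (F x u) (F y w) ≤ a * dist x y + b * dist u w)
    {p : ι → ι} {u w : ι → U} {x y : ι → X}
    (huw : BddAbove (Set.range fun i => dist (u i) (w i)))
    (hxy : BddAbove (Set.range fun i => dist (x i) (y i)))
    (hx : ∀ i, x i = F (x (p i)) (u i)) (hy : ∀ i, y i = F (y (p i)) (w i)) :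
    ⨆ i, dist (x i) (y i) ≤ b / (1 - a) * ⨆ i, dist (u i) (w i) := by
  rw [div_mul_eq_mul_div]
  refine iSup_le_div_one_sub_of_le_mul_comp_add (p := p) ha hxy fun i => ?_
  calc dist (x i) (y i) = dist (F (x (p i)) (u i)) (F (y (p i)) (w i)) := by rw [← hx, ← hy]
    _ ≤ a * dist (x (p i)) (y (p i)) + b * dist (u i) (w i) := hF ..
    _ ≤ a * dist (x (p i)) (y (p i)) + b * ⨆ i, dist (u i) (w i) := by
      grw [← le_ciSup huw i]

theorem bddAbove_range_norm_sub {ι E : Type*} [SeminormedAddGroup E] {f g : ι → E}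
    (hf : ∃ M : ℝ, ∀ i, ‖f i‖ ≤ M) (hg : ∃ M : ℝ, ∀ i, ‖g i‖ ≤ M) :
    BddAbove (Set.range fun i => ‖f i - g i‖) := by
  obtain ⟨A, hA⟩ := hf
  obtain ⟨B, hB⟩ := hg
  exact ⟨A + B, Set.forall_mem_range.2 fun i => norm_sub_le_of_le (hA i) (hB i)⟩

section Reservoir

variable {𝕜 E F V : Type*} [NontriviallyNormedField 𝕜] [SeminormedAddCommGroup E]
  [NormedSpace 𝕜 E] [SeminormedAddCommGroup F] [NormedSpace 𝕜 F] [SeminormedAddCommGroup V]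
  [NormedSpace 𝕜 V]

/-- The reservoir update `(r, v) ↦ σ (Wres r + Win v)`, which produces the next state from the
state `r` and the input `v`. The activation may map a space `F` of pre-activations to a different
state space `E`. -/
def reservoirUpdate (σ : F → E) (Wres : E →L[𝕜] F) (Win : V →L[𝕜] F) (r : E) (v : V) : E :=
  σ (Wres r + Win v)

variable {σ : F → E} {L : ℝ≥0} {Wres : E →L[𝕜] F} {Win : V →L[𝕜] F}

theorem dist_reservoirUpdate_le (hσ : LipschitzWith L σ) (r r' : E) (v v' : V) :
    dist (reservoirUpdate σ Wres Win r v) (reservoirUpdate σ Wres Win r' v') ≤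
      L * ‖Wres‖ * dist r r' + L * ‖Win‖ * dist v v' :=
  calc dist (σ (Wres r + Win v)) (σ (Wres r' + Win v'))
      ≤ L * dist (Wres r + Win v) (Wres r' + Win v') := hσ.dist_le_mul ..
    _ ≤ L * (dist (Wres r) (Wres r') + dist (Win v) (Win v')) := by
      grw [dist_add_add_le]
    _ ≤ L * (‖Wres‖ * dist r r' + ‖Win‖ * dist v v') := by
      gcongr
      exacts [Wres.lipschitz.dist_le_mul .., Win.lipschitz.dist_le_mul ..]
    _ = L * ‖Wres‖ * dist r r' + L * ‖Win‖ * dist v v' := by ring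

theorem reservoir_input_to_state_lipschitz_general (hσ : LipschitzWith L σ)
    (hcontr : L * ‖Wres‖ < 1) {v v' : ℤ → V} {r r' : ℤ → E}
    (hv : BddAbove (Set.range fun k => ‖v k - v' k‖))
    (hr_bdd : BddAbove (Set.range fun k => ‖r k - r' k‖))
    (hr : ∀ k, r k = reservoirUpdate σ Wres Win (r (k - 1)) (v k))
    (hr' : ∀ k, r' k = reservoirUpdate σ Wres Win (r' (k - 1)) (v' k)) :
    ⨆ k, ‖r k - r' k‖ ≤ L * ‖Win‖ / (1 - L * ‖Wres‖) * ⨆ k, ‖v k - v' k‖ := by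
  simp only [← dist_eq_norm] at hv hr_bdd ⊢
  exact iSup_dist_le_of_driven_contraction (a := L * ‖Wres‖₊) (b := L * ‖Win‖₊) hcontr
    (dist_reservoirUpdate_le hσ) hv hr_bdd hr hr'

end Reservoir

/-- **Global Lipschitz continuity of the input-history-to-state map.**
Under `γ = Lσ·‖W_res‖ < 1`, the unique bounded trajectories `r, r̃` driven by bounded
inputs `v, ṽ` satisfy `sup_k ‖r k - r̃ k‖ ≤ (Lσ·‖W_in‖/(1-γ)) · sup_k ‖v k - ṽ k‖`. -/
theorem reservoir_input_to_state_lipschitz {nr nv : ℕ}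
    (σ : EuclideanSpace ℝ (Fin nr) → EuclideanSpace ℝ (Fin nr)) (Lσ : ℝ≥0)
    (hσ : LipschitzWith Lσ σ)
    (Wres : EuclideanSpace ℝ (Fin nr) →L[ℝ] EuclideanSpace ℝ (Fin nr))
    (Win : EuclideanSpace ℝ (Fin nv) →L[ℝ] EuclideanSpace ℝ (Fin nr))
    (γ : ℝ) (hγ : γ = (Lσ : ℝ) * ‖Wres‖) (hcontr : γ < 1)
    (v v' : ℤ → EuclideanSpace ℝ (Fin nv))
    (hv : ∃ M : ℝ, ∀ k : ℤ, ‖v k‖ ≤ M)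
    (hv' : ∃ M : ℝ, ∀ k : ℤ, ‖v' k‖ ≤ M)
    (r r' : ℤ → EuclideanSpace ℝ (Fin nr))
    (hrbdd : ∃ M : ℝ, ∀ k : ℤ, ‖r k‖ ≤ M)
    (hr'bdd : ∃ M : ℝ, ∀ k : ℤ, ‖r' k‖ ≤ M)
    (hr : ∀ k : ℤ, r k = σ (Wres (r (k - 1)) + Win (v k)))
    (hr' : ∀ k : ℤ, r' k = σ (Wres (r' (k - 1)) + Win (v' k))) :
    (⨆ k : ℤ, ‖r k - r' k‖) ≤
      (Lσ : ℝ) * ‖Win‖ / (1 - γ) * ⨆ k : ℤ, ‖v k - v' k‖ := by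
  subst hγ
  exact reservoir_input_to_state_lipschitz_general hσ hcontr
    (bddAbove_range_norm_sub hv hv') (bddAbove_range_norm_sub hrbdd hr'bdd) hr hr'
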